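/- arXiv:2012.03771 — 6 statements merged into one kernel-verified Lean document; each statement's English description precedes it below -/
import Mathlib

section
/- Let P be a prime with P ≥ 3 and let K = P# be the primorial of P, and suppose neither K − 1 nor K + 1 is prime. If q and q' are primes with q < K < q' and there is no prime strictly between q and q', then q' − q ≥ 2P + 3. -/
/-!
Write `K` for the primorial of `P`. For `2 ≤ j ≤ P + 1` the number `j` has a prime factor
`p ≤ P` (for `j = P + 1` because `P + 1` is even), and `p ∣ K`, so `p` divides both `K + j` and
`K - j`. Hence `K + j` is composite, and `K - j` is composite unless it equals `p`. Together
with the hypotheses on `K ± 1` this gives `q' ≥ K + P + 2`, and either `q + P + 2 ≤ K` or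
`q ≤ P`. The second case is settled by size: `K ≥ 6 * P` for `P ≥ 5`, while `P = 3` is
excluded since `6 - 1` is prime.
-/

theorem exists_prime_le_dvd_primorial (P : ℕ) (hP : P.Prime) (hP3 : 3 ≤ P) (j : ℕ)
    (hj2 : 2 ≤ j) (hj : j ≤ P + 1) : ∃ p, p.Prime ∧ p ≤ P ∧ p ∣ j ∧ p ∣ primorial P := by
  obtain ⟨p, hp, hpj, hpP⟩ : ∃ p, p.Prime ∧ p ∣ j ∧ p ≤ P := by
    rcases Nat.lt_or_ge P j with h | h
    · have hodd : P % 2 = 1 := (hP.eq_two_or_odd).resolve_left (by omega)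
      exact ⟨2, Nat.prime_two, by omega, by omega⟩
    · have hjd := Nat.minFac_dvd j
      exact ⟨j.minFac, Nat.minFac_prime (by omega), hjd,
        (Nat.le_of_dvd (by omega) hjd).trans h⟩
  exact ⟨p, hp, hpP, hpj, hp.dvd_primorial_iff.2 hpP⟩

theorem six_mul_le_primorial (P : ℕ) (hP : P.Prime) (hP5 : 5 ≤ P) : 6 * P ≤ primorial P := by
  have h2 : 2 ∣ primorial P := Nat.prime_two.dvd_primorial_iff.2 (by omega)
  have h3 : 3 ∣ primorial P := Nat.prime_three.dvd_primorial_iff.2 (by omega)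
  have h6 : 6 ∣ primorial P := by omega
  have hPK : P ∣ primorial P := hP.dvd_primorial_iff.2 le_rfl
  have hcop : Nat.Coprime 6 P := by
    rw [Nat.coprime_comm, hP.coprime_iff_not_dvd]
    intro h
    have := Nat.le_of_dvd (by norm_num) h
    interval_cases P
    · omega
    · norm_num at hP
  exact Nat.le_of_dvd (primorial_pos P) (hcop.mul_dvd_of_dvd_of_dvd h6 hPK)

/-- Let `P ≥ 3` be a prime, `K = P#` the primorial of `P`, and suppose neither `K - 1`
nor `K + 1` is prime. If `q` and `q'` are primes with `q < K < q'` and there is no prime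
strictly between `q` and `q'`, then `q' - q ≥ 2 * P + 3`. -/
theorem primorial_gap_ge (P : ℕ) (hP : P.Prime) (hP3 : 3 ≤ P)
    (hdn : ¬ (primorial P - 1).Prime) (hup : ¬ (primorial P + 1).Prime)
    (q q' : ℕ) (hq : q.Prime) (hq' : q'.Prime)
    (h1 : q < primorial P) (h2 : primorial P < q')
    (hno : ∀ r : ℕ, q < r → r < q' → ¬ r.Prime) :
    2 * P + 3 ≤ q' - q := by
  have hupper : primorial P + P + 2 ≤ q' := by
    by_contra! hlt
    have hne : q' ≠ primorial P + 1 := fun h => hup (h ▸ hq')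
    obtain ⟨p, hp, hpP, hpj, hpK⟩ := exists_prime_le_dvd_primorial P hP hP3
      (q' - primorial P) (by omega) (by omega)
    have hpq : p ∣ q' := (Nat.dvd_sub_iff_left h2.le hpK).1 hpj
    have hpeq := (Nat.prime_dvd_prime_iff_eq hp hq').1 hpq
    have := Nat.le_of_dvd (primorial_pos P) hpK
    omega
  have hlower : q + P + 2 ≤ primorial P ∨ q ≤ P := by
    by_contra! hlt
    have hne : q ≠ primorial P - 1 := fun h => hdn (h ▸ hq)
    obtain ⟨p, hp, hpP, hpj, hpK⟩ := exists_prime_le_dvd_primorial P hP hP3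
      (primorial P - q) (by omega) (by omega)
    have hpq : p ∣ q := (Nat.dvd_sub_iff_right h1.le hpK).1 hpj
    have hpeq := (Nat.prime_dvd_prime_iff_eq hp hq).1 hpq
    omega
  rcases hlower with h | h
  · omega
  · rcases Nat.lt_or_ge P 5 with h5 | h5
    · interval_cases P
      · have h6 : primorial 3 = 6 := by decide
        rw [h6] at hdn
        norm_num at hdn
      · norm_num at hP
    · have := six_mul_le_primorial P hP h5
      omega
end

section
/- Let P be a prime with P ≥ 3 and let K = P#/2, where P# is the primorial of P. If x is an integer with 1 ≤ x ≤ 2P and K + x is prime, then x = 2^k for some integer k ≥ 1. -/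
/-!
Write `K = P# / 2`. Since `P#` is squarefree, `K` is odd, and it is still divisible by every odd
prime `q ≤ P`; in particular `K ≥ 3`. A prime `K + x` is therefore odd, which forces `x` to be even.
If an odd prime `q` divided `x`, then `2 * q ∣ x ≤ 2 * P` would give `q ≤ P`, so `q` would divide
both `K` and `K + x`, which is impossible as `q ≤ K < K + x`. Hence `x` is a power of two, and it
is not `1` because it is even.
-/

/-- Let `P ≥ 3` be a prime and `K = P# / 2`. If `x` is an integer with `1 ≤ x ≤ 2 * P`
and `K + x` is prime, then `x = 2 ^ k` for some integer `k ≥ 1`. -/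
theorem primorial_div_two_prime_offset_pow_two (P : ℕ) (hP : P.Prime) (hP3 : 3 ≤ P)
    (x : ℕ) (hx1 : 1 ≤ x) (hx2 : x ≤ 2 * P)
    (hprime : (primorial P / 2 + x).Prime) :
    ∃ k : ℕ, 1 ≤ k ∧ x = 2 ^ k := by
  obtain ⟨K, hK⟩ : 2 ∣ primorial P := Nat.prime_two.dvd_primorial_iff.2 (by omega)
  have hK2 : primorial P / 2 = K := by omega
  rw [hK2] at hprime
  have hKpos : 0 < K := by have := primorial_pos P; omega
  -- `K` is odd because the primorial is squarefree.
  have hKodd : ¬ 2 ∣ K := fun h => by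
    have hsq := squarefree_primorial P
    rw [hK] at hsq
    exact Nat.prime_one_false (by simpa using hsq 2 (Nat.mul_dvd_mul_left 2 h))
  have hdvd : ∀ q : ℕ, q.Prime → Odd q → q ≤ P → q ∣ K := fun q hq hodd hqP => by
    have h : q ∣ 2 * K := hK ▸ hq.dvd_primorial_iff.2 hqP
    exact (Nat.Coprime.dvd_mul_left hodd.coprime_two_right).1 h
  have hK3 : 3 ≤ K := Nat.le_of_dvd hKpos (hdvd 3 Nat.prime_three (by decide) hP3)
  -- `K + x` is a prime larger than `2`, hence odd, so `x` is even.
  have hxeven : 2 ∣ x := by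
    rcases hprime.eq_two_or_odd with h | h <;> omega
  rcases x.eq_two_pow_or_exists_odd_prime_and_dvd with ⟨k, hk⟩ | ⟨q, hq, hqx, hodd⟩
  · refine ⟨k, Nat.one_le_iff_ne_zero.2 ?_, hk⟩
    rintro rfl
    simp at hk
    omega
  · exfalso
    -- As `x` is even, `2 * q ∣ x ≤ 2 * P`, so `q ≤ P` divides both `K` and `x`.
    have h2q : 2 * q ∣ x := hodd.coprime_two_left.mul_dvd_of_dvd_of_dvd hxeven hqx
    have hle := Nat.le_of_dvd hx1 h2q
    have hqK := hdvd q hq hodd (by omega)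
    have heq := (Nat.prime_dvd_prime_iff_eq hq hprime).1 (dvd_add hqK hqx)
    have := Nat.le_of_dvd hKpos hqK
    omega
end

section
/- Let p, K be coprime integers with 1 ≤ K < p, and let L, R be integers with 0 ≤ L ≤ R < p such that no multiple of K lies in the interval [L, R]. Suppose m is a positive integer with L ≤ (m·K) mod p ≤ R, and set i = ⌊m·K / p⌋. Then i ≥ 1 and L mod K ≤ (−p·i) mod K ≤ R mod K. -/
/-! Write `v = m * K - p * i` for the residue of `m * K` modulo `p`. If `i = 0`, then `v = m * K`
would be a multiple of `K` in `[L, R]`, so `i ≥ 1`. Since `[L, R]` contains no multiple of `K`,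
the quotients by `K` of `L`, `v` and `R` coincide, hence reduction modulo `K` preserves
`L ≤ v ≤ R`; and `v` is congruent to `-p * i` modulo `K`. -/

/-- Forward direction of case (e) of Equation 8: if `m > 0` solves `L ≤ (m*K) % p ≤ R`
and no multiple of `K` lies in `[L, R]`, then `i = ⌊m*K / p⌋ ≥ 1` solves the reduced
problem `L % K ≤ (-p*i) % K ≤ R % K`. -/
theorem case_e_forward (p K L R : ℤ) (hcop : IsCoprime p K) (hK1 : 1 ≤ K) (hKp : K < p)
    (hL : 0 ≤ L) (hLR : L ≤ R) (hR : R < p)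
    (hnomult : ¬ ∃ j : ℤ, L ≤ j * K ∧ j * K ≤ R)
    (m : ℤ) (hm : 0 < m) (h1 : L ≤ (m * K) % p) (h2 : (m * K) % p ≤ R) :
    1 ≤ m * K / p ∧ L % K ≤ (-(p * (m * K / p))) % K ∧ (-(p * (m * K / p))) % K ≤ R % K := by
  have hv : m * K % p + p * (m * K / p) = m * K := Int.emod_add_mul_ediv _ _
  have hi : 0 ≤ m * K / p := Int.ediv_nonneg (by positivity) (by omega)
  generalize m * K / p = i at *
  generalize m * K % p = v at *
  have hvK : (-(p * i)) % K = v % K := by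
    rw [show -(p * i) = v + K * (-m) by linarith, Int.add_mul_emod_self_left]
  have hquot : R / K ≤ L / K := by
    by_contra! hlt
    -- Otherwise `(R / K) * K`, the largest multiple of `K` not exceeding `R`, lies in `[L, R]`.
    refine hnomult ⟨R / K, ?_, Int.ediv_mul_le _ (by omega)⟩
    have hLlt : L < (L / K + 1) * K := Int.lt_ediv_add_one_mul_self _ (by omega)
    nlinarith
  have hLv : L / K ≤ v / K := Int.ediv_le_ediv (by omega) h1
  have hvR : v / K ≤ R / K := Int.ediv_le_ediv (by omega) h2
  have hvL : v / K = L / K := by omega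
  have hRL : R / K = L / K := by omega
  refine ⟨?_, ?_, ?_⟩
  · by_contra! hlt
    obtain rfl : i = 0 := by omega
    exact hnomult ⟨m, by linarith, by linarith⟩
  · rw [hvK, Int.emod_def, Int.emod_def, hvL]
    linarith
  · rw [hvK, Int.emod_def, Int.emod_def, hvL, hRL]
    linarith
end

section
/- Let p, K be coprime integers with 1 ≤ K < p, and let L, R be integers with 0 ≤ L ≤ R < p such that no multiple of K lies in the interval [L, R]. Suppose i is a nonnegative integer with L mod K ≤ (−p·i) mod K ≤ R mod K, and set m = ⌈(L + p·i)/K⌉. Then L ≤ m·K − i·p ≤ R, and consequently (m·K) mod p = m·K − i·p lies in [L, R]. -/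
/-!
Since no multiple of `K` lies in `[L, R]`, the numbers `L` and `R` have the same quotient `a` by `K`.
Write `-(p * i) = c * K + s` with `0 ≤ s < K`. Then `L + p * i = (a - c) * K + (L % K - s)`, where
`-K < L % K - s ≤ 0`, so the ceiling is `a - c`. Hence `m * K - i * p = a * K + s`, which lies between
`L = a * K + L % K` and `R = a * K + R % K`.
-/

/-- Backward direction of case (e) of Equation 8: if `i ≥ 0` solves the reduced problem
`L % K ≤ (-p*i) % K ≤ R % K` and no multiple of `K` lies in `[L, R]`, then
`m = ⌈(L + p*i)/K⌉` satisfies `L ≤ m*K - i*p ≤ R` and `(m*K) % p = m*K - i*p`. -/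
theorem case_e_backward (p K L R : ℤ) (hcop : IsCoprime p K) (hK1 : 1 ≤ K) (hKp : K < p)
    (hL : 0 ≤ L) (hLR : L ≤ R) (hR : R < p)
    (hnomult : ¬ ∃ j : ℤ, L ≤ j * K ∧ j * K ≤ R)
    (i : ℤ) (hi : 0 ≤ i) (h1 : L % K ≤ (-(p * i)) % K) (h2 : (-(p * i)) % K ≤ R % K) :
    L ≤ ⌈((L + p * i : ℤ) : ℚ) / K⌉ * K - i * p ∧
    ⌈((L + p * i : ℤ) : ℚ) / K⌉ * K - i * p ≤ R ∧
    (⌈((L + p * i : ℤ) : ℚ) / K⌉ * K) % p = ⌈((L + p * i : ℤ) : ℚ) / K⌉ * K - i * p := by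
  have hK : 0 < K := by lia
  have hL' := Int.mul_ediv_add_emod L K
  have hR' := Int.mul_ediv_add_emod R K
  have hs' := Int.mul_ediv_add_emod (-(p * i)) K
  have hl0 := Int.emod_nonneg L hK.ne'
  have hr0 := Int.emod_nonneg R hK.ne'
  have hsK := Int.emod_lt_of_pos (-(p * i)) hK
  have hq : L / K = R / K := by
    refine le_antisymm (Int.ediv_le_ediv hK hLR) ((Int.le_ediv_iff_mul_le hK).2 ?_)
    -- The multiple `(R / K) * K` is at most `R`, so it must lie below `L`.
    by_contra! h
    exact hnomult ⟨R / K, h.le, by linarith⟩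
  have hm : ⌈((L + p * i : ℤ) : ℚ) / K⌉ = L / K - (-(p * i)) / K := by
    have hKQ : (0 : ℚ) < K := by exact_mod_cast hK
    rw [Int.ceil_eq_iff, lt_div_iff₀ hKQ, div_le_iff₀ hKQ]
    constructor
    · have : (L / K - (-(p * i)) / K - 1) * K < L + p * i := by linarith
      exact_mod_cast this
    · have : L + p * i ≤ (L / K - (-(p * i)) / K) * K := by linarith
      exact_mod_cast this
  rw [hm]
  have hlow : L ≤ (L / K - (-(p * i)) / K) * K - i * p := by linarith
  have hupp : (L / K - (-(p * i)) / K) * K - i * p ≤ R := by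
    rw [← hq] at hR'
    linarith
  refine ⟨hlow, hupp, ?_⟩
  rw [← Int.sub_mul_emod_self_right _ i p]
  exact Int.emod_eq_of_lt (by linarith) (by linarith)
end

section
/- Let p, K, L, R be integers with 1 ≤ K < p, 0 ≤ L ≤ R < p, and R − L < K. If m₁ < m₂ are nonnegative integers both satisfying L ≤ (m·K) mod p ≤ R, then ⌊m₁·K / p⌋ < ⌊m₂·K / p⌋. -/
/-- If `R - L < K` then the map `m ↦ ⌊m*K/p⌋` is strictly increasing on solutions of
`L ≤ (m*K) % p ≤ R`. -/
theorem case_e_monotone (p K L R : ℤ) (hK1 : 1 ≤ K) (hKp : K < p)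
    (hL : 0 ≤ L) (hLR : L ≤ R) (hR : R < p) (hRLK : R - L < K)
    (m₁ m₂ : ℤ) (hm₁ : 0 ≤ m₁) (hlt : m₁ < m₂)
    (h₁L : L ≤ (m₁ * K) % p) (h₁R : (m₁ * K) % p ≤ R)
    (h₂L : L ≤ (m₂ * K) % p) (h₂R : (m₂ * K) % p ≤ R) :
    m₁ * K / p < m₂ * K / p := by
  have e₁ := Int.emod_add_mul_ediv (m₁ * K) p
  have e₂ := Int.emod_add_mul_ediv (m₂ * K) p
  have hK : K ≤ m₂ * K - m₁ * K := by nlinarith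
  -- The products differ by at least `K`, the remainders by at most `R - L < K`,
  -- so the quotients cannot be equal or out of order.
  have hp : p * (m₁ * K / p) < p * (m₂ * K / p) := by linarith
  exact lt_of_mul_lt_mul_left hp (by linarith)
end

section
/- Let p, K be coprime integers with 1 ≤ K < p, and let L, R be integers with 0 < L ≤ R < p such that no multiple of K lies in the interval [L, R]. Suppose i₀ is the least positive integer i such that L mod K ≤ (−p·i) mod K ≤ R mod K, and such an i exists. Then m₀ = ⌈(L + p·i₀)/K⌉ is the least positive integer m satisfying L ≤ (m·K) mod p ≤ R. -/
/-!
A solution `m` of `L ≤ (m * K) % p ≤ R` amounts to a pair `(m, i)` with `L ≤ m * K - p * i ≤ R`,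
where `i = m * K / p`. As `[L, R]` contains no multiple of `K`, it lies strictly between two
consecutive multiples, so reduction modulo `K` is an order isomorphism from `[L, R]` onto
`[L % K, R % K]`. Hence a given `i` admits such an `m` exactly when `-(p * i)` solves the reduced
problem (`exists_mul_sub_mem_iff`), and the least such `m` is then `⌈(L + p * i) / K⌉`. This is
monotone in `i`, so the least `i` gives the least `m`; the value `i = 0` is excluded because it
would put a multiple of `K` in `[L, R]`.
-/

/-- An interval free of multiples of `K` lies between two consecutive multiples of `K`. -/
lemma ediv_eq_of_no_multiple {K L R : ℤ} (hK : 0 < K)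
    (hnomult : ¬ ∃ j : ℤ, L ≤ j * K ∧ j * K ≤ R) {s : ℤ} (hLs : L ≤ s) (hsR : s ≤ R) :
    s / K = L / K := by
  apply le_antisymm
  · by_contra! h
    have h1 : s / K * K ≤ s := Int.ediv_mul_le s hK.ne'
    have h2 : L < s / K * K := (Int.ediv_lt_iff_lt_mul hK).1 h
    exact hnomult ⟨s / K, h2.le, h1.trans hsR⟩
  · exact Int.ediv_le_ediv hK hLs

lemma exists_mul_sub_mem_iff {p K L R : ℤ} (hK : 0 < K) (hLR : L ≤ R)
    (hnomult : ¬ ∃ j : ℤ, L ≤ j * K ∧ j * K ≤ R) (i : ℤ) :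
    (∃ m : ℤ, L ≤ m * K - p * i ∧ m * K - p * i ≤ R) ↔
      L % K ≤ (-(p * i)) % K ∧ (-(p * i)) % K ≤ R % K := by
  have hq : R / K = L / K := ediv_eq_of_no_multiple hK hnomult hLR le_rfl
  have hLd := Int.mul_ediv_add_emod L K
  have hRd := Int.mul_ediv_add_emod R K
  rw [hq] at hRd
  constructor
  · rintro ⟨m, h1, h2⟩
    have hs := ediv_eq_of_no_multiple hK hnomult h1 h2
    have hsd := Int.mul_ediv_add_emod (m * K - p * i) K
    have hmod : (m * K - p * i) % K = (-(p * i)) % K := by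
      rw [show m * K - p * i = -(p * i) + m * K by ring, Int.add_mul_emod_self_right]
    rw [hs, hmod] at hsd
    constructor <;> linarith
  · rintro ⟨h1, h2⟩
    have hd := Int.mul_ediv_add_emod (-(p * i)) K
    -- This `m` moves `-(p * i)` into the block `[K * (L / K), K * (L / K) + K)`.
    refine ⟨L / K - (-(p * i)) / K, ?_, ?_⟩ <;> linarith

/-- Full correctness of case (e) of Equation 8: if `i₀` is the least positive solution
of the reduced problem `L % K ≤ (-p*i) % K ≤ R % K`, then `m₀ = ⌈(L + p*i₀)/K⌉` is the
least positive integer `m` with `L ≤ (m*K) % p ≤ R`. -/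
theorem case_e_correct (p K L R : ℤ) (hcop : IsCoprime p K) (hK1 : 1 ≤ K) (hKp : K < p)
    (hL : 0 < L) (hLR : L ≤ R) (hR : R < p)
    (hnomult : ¬ ∃ j : ℤ, L ≤ j * K ∧ j * K ≤ R)
    (i₀ : ℤ)
    (hi₀ : IsLeast {i : ℤ | 0 < i ∧ L % K ≤ (-(p * i)) % K ∧ (-(p * i)) % K ≤ R % K} i₀) :
    IsLeast {m : ℤ | 0 < m ∧ L ≤ (m * K) % p ∧ (m * K) % p ≤ R}
      ⌈((L + p * i₀ : ℤ) : ℚ) / K⌉ := by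
  have hK : 0 < K := by omega
  have hp : 0 < p := by omega
  have hKQ : (0 : ℚ) < K := by exact_mod_cast hK
  have hceil : ∀ m : ℤ, ⌈((L + p * i₀ : ℤ) : ℚ) / K⌉ ≤ m ↔ L + p * i₀ ≤ m * K := by
    intro m
    rw [Int.ceil_le, div_le_iff₀ hKQ]
    exact_mod_cast Iff.rfl
  obtain ⟨⟨hi₀pos, hi₀red⟩, hi₀min⟩ := hi₀
  generalize ⌈((L + p * i₀ : ℤ) : ℚ) / K⌉ = m₀ at hceil ⊢
  have hlow : L + p * i₀ ≤ m₀ * K := (hceil m₀).1 le_rfl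
  have hpi : 0 < p * i₀ := mul_pos hp hi₀pos
  constructor
  · obtain ⟨m, h1, h2⟩ := (exists_mul_sub_mem_iff hK hLR hnomult i₀).2 hi₀red
    have hm : m₀ ≤ m := (hceil m).2 (by linarith)
    have hmK : m₀ * K ≤ m * K := mul_le_mul_of_nonneg_right hm hK.le
    have hmod : (m₀ * K) % p = m₀ * K - p * i₀ := by
      rw [← Int.sub_mul_emod_self_left (m₀ * K) p i₀]
      exact Int.emod_eq_of_lt (by linarith) (by linarith)
    refine ⟨pos_of_mul_pos_left (by linarith : 0 < m₀ * K) hK.le, ?_, ?_⟩ <;>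
      rw [hmod] <;> linarith
  · rintro m ⟨hm, h1, h2⟩
    have hd := Int.mul_ediv_add_emod (m * K) p
    have hi0 : 0 ≤ m * K / p := Int.ediv_nonneg (mul_pos hm hK).le hp.le
    have hine : m * K / p ≠ 0 := by
      intro h
      rw [h] at hd
      exact hnomult ⟨m, by linarith, by linarith⟩
    have hle : i₀ ≤ m * K / p :=
      hi₀min ⟨by omega, (exists_mul_sub_mem_iff hK hLR hnomult _).1
        ⟨m, by linarith, by linarith⟩⟩
    have := mul_le_mul_of_nonneg_left hle hp.le
    exact (hceil m).2 (by linarith)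
end
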